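/- Let V ⊆ V' be an immediate extension of valuation rings containing the field Q of rational numbers. Then V' is a filtered direct colimit of smooth V-algebras; equivalently, for every finitely presented V-algebra A and every V-algebra homomorphism u : A → V', there exist a smooth V-algebra B, a V-algebra homomorphism A → B and a V-algebra homomorphism B → V' whose composite is u. -/

import Mathlib

/-- An extension `V ⊆ V'` of valuation rings (given by an injective algebra structure)
is *immediate* if it is local (the maximal ideal of `V` is the contraction of that of
`V'`), the induced map of residue fields is an isomorphism (i.e. surjective), and the
induced map of value groups is an isomorphism (every nonzero element of `V'` has the
same value as a quotient of elements of `V`, i.e. `x * b` is associated to some `a`). -/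
def IsImmediateExtension (V V' : Type*) [CommRing V] [IsLocalRing V]
    [CommRing V'] [IsLocalRing V'] [Algebra V V'] : Prop :=
  Function.Injective (algebraMap V V') ∧
  (∀ a : V, algebraMap V V' a ∈ IsLocalRing.maximalIdeal V' ↔
    a ∈ IsLocalRing.maximalIdeal V) ∧
  (∀ x : V', ∃ a : V, x - algebraMap V V' a ∈ IsLocalRing.maximalIdeal V') ∧
  (∀ x : V', x ≠ 0 → ∃ a b : V, a ≠ 0 ∧ b ≠ 0 ∧
    Associated (algebraMap V V' a) (x * algebraMap V V' b))

/-!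
Adjoin one element `y` of `V'` at a time, replacing `V'` by `V' ∩ Frac V(y)`. Let `K = Frac V`, let
`L` be the localization of `K[X]` at the kernel of evaluation at `y`, and let `w` be the valuation
of `V'` pulled back to `L`. A chart is a smooth `V`-subalgebra of `L` on which `w ≤ 1` and which is
stable under `κ · d/dX` for some constant `κ`. By induction on `n`, there is a chart on which
finitely many given polynomials of degree at most `n` become a constant times an element of value
`1`, while, up to a constant, finitely many given polynomials each have an iterated derivative of
value `1`.

For the inductive step let `f` have degree `n + 1`. As the derivative of `f` is already normalized,
either `f` is normalized or `f = c u`, where `(κ · d/dX) u` has value `1` and may be inverted. Then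
adjoin `x = u / e` with `e` a constant such that `w e = w u < 1`: this is smooth because
`B[X] / (u - e X)` is so when a derivation of `B` maps `u` to a unit. Replace `κ` by `e κ`. Modulo
the maximal ideal of `V` the new derivation `D` kills `B`, so if `d` is the last index at which the
expansion `∑ aⱼ xʲ` of a polynomial in powers of `f` has a coefficient of value `1`, then its `d`-th
derivative is congruent to `d! a_d (D x) ^ d`, which has value `1` since `d!` is a unit.

Finally the smooth algebras obtained in `L` must be mapped to `V'`: their kernel is generated by an
element with a unit derivative, so that the quotient is still smooth.
-/

section Smooth

open Polynomial

theorem smooth_quotient_span_singleton_of_isUnit_derivation {R A : Type*} [CommRing R]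
    [CommRing A] [Algebra R A] [Algebra.Smooth R A] (D : Derivation R A A) {h : A}
    (hD : IsUnit (D h)) : Algebra.Smooth R (A ⧸ Ideal.span {h}) := by
  obtain ⟨t, ht⟩ := hD.exists_right_inv
  refine ⟨.of_comp_surjective fun B _ _ I hI f ↦ ?_,
    Algebra.FinitePresentation.quotient (Submodule.fg_span_singleton h)⟩
  obtain ⟨F, hF⟩ := Algebra.FormallySmooth.comp_surjective R A I hI
    (f.comp (Ideal.Quotient.mkₐ R (Ideal.span {h})))
  have hF (x : A) : Ideal.Quotient.mk I (F x) = f (Ideal.Quotient.mk _ x) :=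
    DFunLike.congr_fun hF x
  have hFh : F h ∈ I := by
    rw [← Ideal.Quotient.eq_zero_iff_mem, hF,
      Ideal.Quotient.eq_zero_iff_mem.mpr (Ideal.mem_span_singleton_self h), map_zero]
  have hFh_sq : F h * F h = 0 := by
    simpa only [← pow_two, hI, Ideal.mem_bot] using Ideal.pow_mem_pow hFh 2
  -- The lift `F` of `f` need not kill `h`; its correction by `F (t * h * D ·)` does.
  let G : A →ₐ[R] B := AlgHom.ofLinearMap
    (F.toLinearMap - LinearMap.mulLeft R (F t * F h) ∘ₗ F.toLinearMap ∘ₗ D.toLinearMap)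
    (by simp)
    (fun x y ↦ by
      simp only [LinearMap.sub_apply, AlgHom.toLinearMap_apply, map_mul, LinearMap.comp_apply,
        Derivation.coeFn_coe, Derivation.leibniz, smul_eq_mul, map_add, LinearMap.mulLeft_apply]
      linear_combination (- F t ^ 2 * F (D x) * F (D y)) * hFh_sq)
  have hG (x : A) : G x = F x - F t * F h * F (D x) := rfl
  have hGh : G h = 0 := by
    have : F (D h) * F t = 1 := by rw [← map_mul, ht, map_one]
    linear_combination hG h - F h * this
  refine ⟨Ideal.Quotient.liftₐ _ G fun a ha ↦ ?_,
    Ideal.Quotient.algHom_ext _ (AlgHom.ext fun x ↦ ?_)⟩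
  · obtain ⟨b, rfl⟩ := Ideal.mem_span_singleton'.mp ha
    rw [map_mul, hGh, mul_zero]
  · change Ideal.Quotient.mk I (G x) = f (Ideal.Quotient.mk _ x)
    rw [hG, map_sub, hF, sub_eq_self, Ideal.Quotient.eq_zero_iff_mem]
    exact I.mul_mem_right _ (I.mul_mem_left _ hFh)

theorem smooth_polynomial_quotient_of_isUnit_derivation {R A : Type*} [CommRing R]
    [CommRing A] [Algebra R A] [Algebra.Smooth R A] (D : Derivation R A A) {a e : A}
    (ha : IsUnit (D a)) (he : D e = 0) :
    Algebra.Smooth R (A[X] ⧸ Ideal.span {C a - C e * X}) := by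
  have : Algebra.Smooth A A[X] := {}
  have : Algebra.Smooth R A[X] := .comp R A A[X]
  let D' : Derivation R A[X] A[X] :=
    (PolynomialModule.equivPolynomialSelf (R := A)).toLinearMap.compDer D.mapCoeffs
  have hD' (p : A[X]) (i : ℕ) : (D' p).coeff i = D (p.coeff i) := rfl
  have hD'_eq : D' (C a - C e * X) = C (D a) := by
    ext i
    rw [hD']
    rcases i with _ | _ | i <;> simp [coeff_C, coeff_X, he]
  exact smooth_quotient_span_singleton_of_isUnit_derivation D' (hD'_eq ▸ ha.map C)

theorem smooth_range_of_quotient_span_singleton {R A L : Type*} [CommRing R] [IsDomain R]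
    [CommRing A] [CommRing L] [Algebra R A] [Algebra R L] {h : A}
    (hs : Algebra.Smooth R (A ⧸ Ideal.span {h})) {F : A →ₐ[R] L} (hF : F h = 0)
    (hker : ∀ p, F p = 0 → ∃ e : R, e ≠ 0 ∧ h ∣ e • p) : Algebra.Smooth R F.range := by
  have : Module.Flat R (A ⧸ Ideal.span {h}) := Algebra.Smooth.flat R _
  have hspan : Ideal.span {h} = RingHom.ker F := by
    -- `A ⧸ (h)` is flat, so `h` divides `p` as soon as it divides a nonzero multiple `e • p`.
    refine le_antisymm ((Ideal.span_singleton_le_iff_mem _).mpr hF) fun p hp ↦ ?_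
    obtain ⟨e, he, hdvd⟩ := hker p hp
    rw [← Ideal.Quotient.eq_zero_iff_mem, ← smul_eq_zero_iff_right he]
    exact Ideal.Quotient.eq_zero_iff_mem.mpr (Ideal.mem_span_singleton.mpr hdvd)
  have hspan' : Ideal.span {h} = RingHom.ker F.rangeRestrict := by
    rw [hspan, AlgHom.ker_rangeRestrict]
  exact .of_equiv ((Ideal.quotientEquivAlgOfEq R hspan').trans
    (Ideal.quotientKerAlgEquivOfSurjective F.rangeRestrict_surjective))

theorem exists_C_sub_C_mul_X_dvd {A : Type*} [CommRing A] (a e : A) (p : A[X]) :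
    ∃ (n : ℕ) (b : A), C a - C e * X ∣ C e ^ n * p - C b := by
  refine ⟨p.natDegree, (p.scaleRoots e).eval a, ?_⟩
  have h := sub_dvd_eval_sub (C e * X) (C a) ((p.scaleRoots e).map C)
  rwa [eval_map, scaleRoots_eval₂_mul, eval₂_C_X, eval_map, eval₂_hom, ← neg_sub (C a),
    neg_dvd] at h

/-- The subalgebra `B[x]` of an `R`-algebra `L`, for a subalgebra `B` and an element `x`. -/
def adjoinElement {R L : Type*} [CommSemiring R] [CommSemiring L] [Algebra R L]
    (B : Subalgebra R L) (x : L) : Subalgebra R L :=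
  (Algebra.adjoin B {x}).restrictScalars R

namespace adjoinElement

variable {R L : Type*} [CommRing R] [CommRing L] [Algebra R L] {B C : Subalgebra R L} {x a b : L}

theorem le_self : B ≤ adjoinElement B x :=
  fun b hb ↦ (Algebra.adjoin B {x}).algebraMap_mem ⟨b, hb⟩

theorem self_mem : x ∈ adjoinElement B x :=
  Algebra.self_mem_adjoin_singleton B x

theorem mem_iff : b ∈ adjoinElement B x ↔ b ∈ Algebra.adjoin B {x} :=
  Iff.rfl

theorem le_iff : adjoinElement B x ≤ C ↔ B ≤ C ∧ x ∈ C := by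
  refine ⟨fun h ↦ ⟨le_self.trans h, h self_mem⟩, fun ⟨hB, hx⟩ b hb ↦ ?_⟩
  rw [mem_iff] at hb
  induction hb using Algebra.adjoin_induction with
  | mem y hy => rwa [Set.mem_singleton_iff.mp hy]
  | algebraMap b => exact hB b.2
  | add _ _ _ _ h₁ h₂ => exact add_mem h₁ h₂
  | mul _ _ _ _ h₁ h₂ => exact mul_mem h₁ h₂

theorem exists_pow_mul_mem (ha : a ∈ B) (hax : a * x ∈ B) (hb : b ∈ adjoinElement B x) :
    ∃ n : ℕ, a ^ n * b ∈ B := by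
  have hbot : ∀ y ∈ B, y ∈ (⊥ : Subalgebra B L) := fun y hy ↦ ⟨⟨y, hy⟩, rfl⟩
  obtain ⟨n, hn⟩ := Algebra.pow_smul_mem_of_smul_subset_of_mem_adjoin a {x} ⊥
    (Set.smul_set_singleton.trans_subset (Set.singleton_subset_iff.mpr (hbot _ hax))) hb (hbot a ha)
  obtain ⟨c, hc⟩ := hn n le_rfl
  exact ⟨n, by rw [← smul_eq_mul, ← hc]; exact c.2⟩

theorem derivation_mem {S : Type*} [CommRing S] [Algebra S L] {D : Derivation S L L}
    (hB : ∀ b ∈ B, D b ∈ adjoinElement B x) (hx : D x ∈ adjoinElement B x)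
    (hb : b ∈ adjoinElement B x) : D b ∈ adjoinElement B x := by
  rw [mem_iff] at hb
  induction hb using Algebra.adjoin_induction with
  | mem y hy => rwa [Set.mem_singleton_iff.mp hy]
  | algebraMap b => exact hB b b.2
  | add y z _ _ h₁ h₂ =>
    rw [map_add]
    exact add_mem h₁ h₂
  | mul y z hy hz h₁ h₂ =>
    rw [D.leibniz]
    exact add_mem (mul_mem hy h₂) (mul_mem hz h₁)

theorem smooth_of_mul_eq_one [Algebra.Smooth R B] (ha : a ∈ B) (hax : a * x = 1) :
    Algebra.Smooth R (adjoinElement B x) := by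
  let a' : B := ⟨a, ha⟩
  let x' : Algebra.adjoin B {x} := ⟨x, Algebra.self_mem_adjoin_singleton B x⟩
  have : IsLocalization.Away a' (Algebra.adjoin B {x}) := by
    refine .mk a' (.of_mul_eq_one x' (Subtype.ext hax)) (fun b ↦ ?_) fun b c hbc ↦ ?_
    · obtain ⟨n, hn⟩ := exists_pow_mul_mem ha (hax ▸ one_mem B) b.2
      exact ⟨n, ⟨_, hn⟩, Subtype.ext (mul_comm _ _)⟩
    · have hval : (b : L) = c := congrArg (Algebra.adjoin B {x}).val hbc
      exact ⟨0, by rw [Subtype.ext hval]⟩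
  have : Algebra.Smooth B (Algebra.adjoin B {x}) := .of_isLocalization_Away a'
  exact Algebra.Smooth.comp R B (Algebra.adjoin B {x})

theorem smooth_of_isUnit_derivation [IsDomain R] [Algebra.Smooth R B] (D : Derivation R B B)
    {a : B} (ha : IsUnit (D a)) {e : R} (he : e ≠ 0) (hx : e • x = a) :
    Algebra.Smooth R (adjoinElement B x) := by
  let F : B[X] →ₐ[R] L := (aeval (R := B) x).restrictScalars R
  have hFC (b : B) : F (C b) = b := aeval_C (R := B) x b
  have hrange : F.range = adjoinElement B x :=
    congrArg (Subalgebra.restrictScalars R) (Algebra.adjoin_singleton_eq_range_aeval B x).symm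
  have hFh : F (C a - C (algebraMap R B e) * X) = 0 := by
    have hFX : F X = x := aeval_X (R := B) x
    rw [map_sub, map_mul, hFC, hFC, hFX, ← hx, sub_eq_zero, Algebra.smul_def]
    rfl
  rw [← hrange]
  refine smooth_range_of_quotient_span_singleton
    (smooth_polynomial_quotient_of_isUnit_derivation D ha (D.map_algebraMap e)) hFh fun p hp ↦ ?_
  obtain ⟨n, b, q, hq⟩ := exists_C_sub_C_mul_X_dvd a (algebraMap R B e) p
  have hb : b = 0 := by
    have := congrArg F hq
    rw [map_sub, map_mul, hp, map_mul, hFh, zero_mul, mul_zero, hFC, zero_sub, neg_eq_zero] at this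
    exact Subtype.ext this
  refine ⟨e ^ n, pow_ne_zero n he, q, ?_⟩
  rw [← hq, hb, C_0, sub_zero, Algebra.smul_def, map_pow]
  rfl

end adjoinElement

end Smooth

section Charts

open Polynomial

/-- The restriction to a subalgebra `B` of a derivation mapping `B` into itself. -/
def restrictDerivation {R L : Type*} [CommRing R] [CommRing L] [Algebra R L]
    (D : Derivation R L L) (B : Subalgebra R L) (hB : ∀ b ∈ B, D b ∈ B) : Derivation R B B :=
  Derivation.mk' ((D.toLinearMap.comp B.val.toLinearMap).codRestrict (Subalgebra.toSubmodule B)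
    fun b ↦ hB b b.2) fun a b ↦ Subtype.ext (D.leibniz a b)

theorem coe_iterate_restrictDerivation {R L : Type*} [CommRing R] [CommRing L] [Algebra R L]
    {D : Derivation R L L} {B : Subalgebra R L} (hB : ∀ b ∈ B, D b ∈ B) (i : ℕ) (b : B) :
    ((restrictDerivation D B hB)^[i] b : L) = D^[i] b :=
  have hsemi : Function.Semiconj ((↑) : B → L) (restrictDerivation D B hB) D := fun _ ↦ rfl
  hsemi.iterate_right i b

/-- A localization `L` of the polynomial ring `K[X]` with the extension `δ` of `d/dX` to `L`, and a
semivaluation `w` on `L` which has the values of a valuation on `K` with valuation ring `V`. -/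
structure ValuedLine (V K L Γ₀ : Type*) [CommRing V] [Field K] [Algebra V K] [CommRing L]
    [Algebra K L] [LinearOrderedCommGroupWithZero Γ₀] where
  /-- The localization map. -/
  ι : K[X] →ₐ[K] L
  /-- The extension of the formal derivative. -/
  δ : Derivation K L L
  /-- The semivaluation; its support need not be zero. -/
  w : Valuation L Γ₀
  ι_injective : Function.Injective ι
  exists_ι_mul_eq : ∀ x, ∃ P Q, w (ι Q) ≠ 0 ∧ ι Q * x = ι P
  δ_ι : ∀ P, δ (ι P) = ι (derivative P)
  w_X_le_one : w (ι X) ≤ 1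
  integers : (w.comap (algebraMap K L)).Integers V
  exists_w_algebraMap_eq : ∀ x, ∃ c : K, w (algebraMap K L c) = w x
  isUnit_of_w_ne_zero : ∀ x, w x ≠ 0 → IsUnit x

namespace ValuedLine

variable {V K L Γ₀ : Type*} [CommRing V] [Field K] [Algebra V K] [CommRing L] [Algebra K L]
  [LinearOrderedCommGroupWithZero Γ₀] (E : ValuedLine V K L Γ₀)

/-- The valuation with valuation ring `V` which `w` induces on the field `K`. -/
abbrev baseValuation : Valuation K Γ₀ :=
  E.w.comap (algebraMap K L)

theorem w_smul (c : K) (x : L) : E.w (c • x) = E.baseValuation c * E.w x := by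
  rw [Algebra.smul_def, map_mul, Valuation.comap_apply]

theorem exists_eq_smul_w_eq_one {z : L} (hz : E.w z ≠ 0) :
    ∃ c : K, c ≠ 0 ∧ ∃ u, z = c • u ∧ E.w u = 1 := by
  obtain ⟨c, hc⟩ := E.exists_w_algebraMap_eq z
  have hc0 : c ≠ 0 := by
    rintro rfl
    exact hz (by rw [← hc, map_zero, map_zero])
  refine ⟨c, hc0, c⁻¹ • z, (smul_inv_smul₀ hc0 z).symm, ?_⟩
  rw [w_smul, map_inv₀, Valuation.comap_apply, hc, inv_mul_cancel₀ hz]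

variable [Algebra V L] [IsScalarTower V K L]

theorem w_algebraMap_le_one (v : V) : E.w (algebraMap V L v) ≤ 1 := by
  rw [IsScalarTower.algebraMap_apply V K L]
  exact E.integers.map_le_one v

/-- The subalgebra of `L` on which `w` is at most `1`. -/
def integerSubalgebra : Subalgebra V L :=
  { E.w.integer with algebraMap_mem' := E.w_algebraMap_le_one }

/-- A smooth `V`-subalgebra of `L`, a model of the line over `V`, on which `w` is at most `1` and
whose derivations over `V` include `κ • δ`. -/
structure IsChart (B : Subalgebra V L) (κ : K) : Prop where
  smooth : Algebra.Smooth V B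
  w_le_one : ∀ b ∈ B, E.w b ≤ 1
  smul_δ_mem : ∀ b ∈ B, (κ • E.δ) b ∈ B
  ι_X_mem : E.ι X ∈ B
  exists_eq_mul_ι : ∀ b ∈ B, ∃ t ∈ B, IsUnit t ∧ ∃ Q, b = t * E.ι Q

variable {E} {B B' : Subalgebra V L} {κ κ' : K} {a x : L}

theorem ι_map_algebraMap (p : V[X]) :
    E.ι (p.map (algebraMap V K)) = aeval (E.ι X) p := by
  rw [← aeval_map_algebraMap K, aeval_algHom_apply, aeval_X_left_apply]

theorem isChart_adjoin_ι_X : E.IsChart (Algebra.adjoin V {E.ι X}) 1 := by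
  have hmem : E.ι X ∈ Algebra.adjoin V {E.ι X} := Algebra.self_mem_adjoin_singleton V _
  have hrange := Algebra.adjoin_singleton_eq_range_aeval V (E.ι X)
  refine ⟨?_, ?_, fun b hb ↦ ?_, hmem, fun b hb ↦ ?_⟩
  · have hinj : Function.Injective (aeval (E.ι X) : V[X] →ₐ[V] L) := by
      intro p q hpq
      rw [← ι_map_algebraMap, ← ι_map_algebraMap] at hpq
      exact map_injective _ E.integers.hom_inj (E.ι_injective hpq)
    have : Algebra.Smooth V V[X] := {}
    rw [hrange]
    exact .of_equiv (AlgEquiv.ofInjective _ hinj)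
  · exact Algebra.adjoin_le (S := E.integerSubalgebra) (Set.singleton_subset_iff.mpr E.w_X_le_one)
  · rw [hrange] at hb ⊢
    obtain ⟨p, rfl⟩ := hb
    refine ⟨derivative p, ?_⟩
    rw [one_smul]
    change aeval (E.ι X) _ = E.δ (aeval (E.ι X) p)
    rw [← ι_map_algebraMap, ← ι_map_algebraMap, E.δ_ι, derivative_map]
  · rw [hrange] at hb
    obtain ⟨p, rfl⟩ := hb
    exact ⟨1, one_mem _, isUnit_one, p.map (algebraMap V K), by rw [ι_map_algebraMap, one_mul]; rfl⟩

theorem smul_mem {c : K} (hc : E.baseValuation c ≤ 1) {b : L} (hb : b ∈ B) : c • b ∈ B := by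
  obtain ⟨v, rfl⟩ := E.integers.exists_of_le_one hc
  rw [algebraMap_smul]
  exact B.smul_mem hb v

namespace IsChart

variable (h : E.IsChart B κ)

include h

theorem exists_smul_ι_mem [IsDomain V] [IsFractionRing V K] (P : K[X]) :
    ∃ c : V, c ≠ 0 ∧ c • E.ι P ∈ B := by
  obtain ⟨c, hc, hP⟩ := IsLocalization.integerNormalization_spec (nonZeroDivisors V) P
  refine ⟨c, nonZeroDivisors.ne_zero hc, ?_⟩
  rw [← algebraMap_smul K c (E.ι P), ← map_smul, algebraMap_smul, ← hP, ι_map_algebraMap]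
  exact Algebra.adjoin_le (Set.singleton_subset_iff.mpr h.ι_X_mem) (aeval_mem_adjoin_singleton V _)

/-- The hypotheses on `a`, `y` and `c` say that `B[x]` lies in `B[1 / a]`, where `1 / a` is, up to
the constant `c`, the element `y` of `B[x]`. -/
theorem isChart_adjoinElement {c : K} {y : L} (hsmooth : Algebra.Smooth V (adjoinElement B x))
    (hx : E.w x ≤ 1) (hδ : ∀ b ∈ B, (κ' • E.δ) b ∈ adjoinElement B x)
    (hδx : (κ' • E.δ) x ∈ adjoinElement B x)
    (ha : a ∈ B) (hax : a * x ∈ B) (hy : y ∈ adjoinElement B x) (hay : a * c • y = 1) :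
    E.IsChart (adjoinElement B x) κ' := by
  refine ⟨hsmooth, ?_, fun b hb ↦ adjoinElement.derivation_mem hδ hδx hb,
    adjoinElement.le_self h.ι_X_mem, fun b hb ↦ ?_⟩
  · exact (adjoinElement.le_iff (C := E.integerSubalgebra)).mpr ⟨h.w_le_one, hx⟩
  · obtain ⟨n, hn⟩ := adjoinElement.exists_pow_mul_mem ha hax hb
    obtain ⟨t, htB, ht, Q, hQ⟩ := h.exists_eq_mul_ι _ hn
    have hyu : IsUnit y := .of_mul_eq_one (c • a) (by
      rw [← hay, mul_smul_comm, mul_smul_comm, mul_comm])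
    refine ⟨y ^ n * t, mul_mem (pow_mem hy n) (adjoinElement.le_self htB), (hyu.pow n).mul ht,
      c ^ n • Q, ?_⟩
    calc b = (a * c • y) ^ n * b := by rw [hay, one_pow, one_mul]
      _ = (c • y) ^ n * (a ^ n * b) := by rw [mul_pow, mul_right_comm, mul_comm]
      _ = y ^ n * t * E.ι (c ^ n • Q) := by
        rw [hQ, _root_.smul_pow, map_smul, mul_smul_comm, smul_mul_assoc, mul_assoc]

theorem exists_mul_eq_one (ha : a ∈ B) (hw : E.w a = 1) :
    ∃ B', B ≤ B' ∧ E.IsChart B' κ ∧ ∃ t ∈ B', a * t = 1 := by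
  obtain ⟨t, hat⟩ := (E.isUnit_of_w_ne_zero a (hw ▸ one_ne_zero)).exists_right_inv
  have ht : t ∈ adjoinElement B t := adjoinElement.self_mem
  have := h.smooth
  refine ⟨adjoinElement B t, adjoinElement.le_self, h.isChart_adjoinElement (c := 1)
    (adjoinElement.smooth_of_mul_eq_one ha hat) ?_
    (fun b hb ↦ adjoinElement.le_self (h.smul_δ_mem b hb)) ?_ ha (hat ▸ one_mem B) ht
    (by rwa [one_smul]), t, ht, hat⟩
  · have hwt : E.w t = 1 := by simpa only [map_mul, hw, one_mul, map_one] using congrArg E.w hat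
    exact hwt.le
  · rw [Derivation.leibniz_of_mul_eq_one _ ((mul_comm t a).trans hat), smul_eq_mul]
    exact mul_mem (neg_mem (pow_mem ht 2)) (adjoinElement.le_self (h.smul_δ_mem a ha))

theorem isChart_adjoinElement_of_smul_eq [IsDomain V] (ha : a ∈ B) {t : L} (ht : t ∈ B)
    (hat : (κ • E.δ) a * t = 1) {e : V} (he : e ≠ 0) (hx : e • x = a) (hxw : E.w x ≤ 1) :
    E.IsChart (adjoinElement B x) (algebraMap V K e * κ) := by
  have he' : algebraMap V K e ≠ 0 :=
    (map_ne_zero_iff _ E.integers.hom_inj).mpr he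
  have hδ (y : L) : ((algebraMap V K e * κ) • E.δ) y = e • (κ • E.δ) y := by
    rw [mul_smul, Derivation.smul_apply, algebraMap_smul]
  have hδx : ((algebraMap V K e * κ) • E.δ) x = (κ • E.δ) a := by
    rw [← hx, ← algebraMap_smul K e x, Derivation.map_smul, mul_smul, Derivation.smul_apply]
  have hae : algebraMap V L e * x = a := by rw [← Algebra.smul_def, hx]
  have := h.smooth
  refine h.isChart_adjoinElement (a := algebraMap V L e) (y := 1) (c := (algebraMap V K e)⁻¹) ?_ hxw
    (fun b hb ↦ hδ b ▸ adjoinElement.le_self (B.smul_mem (h.smul_δ_mem b hb) e))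
    (hδx ▸ adjoinElement.le_self (h.smul_δ_mem a ha)) (B.algebraMap_mem e) (hae ▸ ha) (one_mem _) ?_
  · let D := restrictDerivation ((κ • E.δ).restrictScalars V) B h.smul_δ_mem
    have hDa : D ⟨a, ha⟩ * ⟨t, ht⟩ = 1 := Subtype.ext hat
    exact adjoinElement.smooth_of_isUnit_derivation D (.of_mul_eq_one _ hDa) he hx
  · rw [IsScalarTower.algebraMap_apply V K L, Algebra.smul_def, mul_one, ← map_mul,
      mul_inv_cancel₀ he', map_one]

end IsChart

end ValuedLine

end Charts

section Content

open Polynomial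

theorem iterate_derivation_sum_sub_mem {R A : Type*} [CommRing R] [CommRing A] [Algebra R A]
    {D : Derivation R A A} {N : Ideal A} (hN : ∀ z ∈ N, D z ∈ N) {x : A} (hx : D (D x) ∈ N)
    (d : ℕ) {a : ℕ → A} (ha : ∀ j, D (a j) ∈ N) :
    D^[d] (∑ j ∈ Finset.range (d + 1), a j * x ^ j) - d.factorial * a d * D x ^ d ∈ N := by
  induction d generalizing a with
  | zero => simp
  | succ d ih =>
    let a' : ℕ → A := fun j ↦ (j + 1 : ℕ) * a (j + 1) * D x
    have ha' (j : ℕ) : D (a' j) ∈ N := by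
      simp only [a', Derivation.leibniz, Derivation.map_natCast, smul_eq_mul, mul_zero, add_zero]
      exact add_mem (N.mul_mem_left _ hx) (N.mul_mem_left _ (N.mul_mem_left _ (ha _)))
    have hstep : D (∑ j ∈ Finset.range (d + 2), a j * x ^ j) =
        ∑ j ∈ Finset.range (d + 1), a' j * x ^ j + ∑ j ∈ Finset.range (d + 2), x ^ j * D (a j) := by
      simp only [map_sum, Derivation.leibniz, Derivation.leibniz_pow, smul_eq_mul, nsmul_eq_mul,
        Finset.sum_add_distrib]
      rw [Finset.sum_range_succ', Nat.cast_zero, zero_mul, mul_zero, add_zero]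
      refine congrArg (· + _) (Finset.sum_congr rfl fun j _ ↦ ?_)
      simp only [a', Nat.add_sub_cancel]
      ring
    have hrest : D^[d] (∑ j ∈ Finset.range (d + 2), x ^ j * D (a j)) ∈ N :=
      Set.MapsTo.iterate (s := (N : Set A)) hN d (sum_mem fun j _ ↦ N.mul_mem_left _ (ha j))
    have hlead : ((d + 1).factorial : A) * a (d + 1) * D x ^ (d + 1) =
        d.factorial * a' d * D x ^ d := by
      rw [Nat.factorial_succ, Nat.cast_mul]
      ring
    rw [Function.iterate_succ_apply, hstep, iterate_map_add, hlead, add_sub_right_comm]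
    exact add_mem (ih ha') hrest

theorem derivation_mem_map_algebraMap {R A : Type*} [CommRing R] [CommRing A] [Algebra R A]
    (D : Derivation R A A) (I : Ideal R) {z : A} (hz : z ∈ I.map (algebraMap R A)) :
    D z ∈ I.map (algebraMap R A) := by
  induction hz using Submodule.span_induction with
  | mem z hz =>
    obtain ⟨r, -, rfl⟩ := hz
    rw [D.map_algebraMap]
    exact zero_mem _
  | zero => rw [map_zero]; exact zero_mem _
  | add y z _ _ hy hz => rw [map_add]; exact add_mem hy hz
  | smul a z hz' hz =>
    rw [smul_eq_mul, D.leibniz]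
    exact add_mem (Ideal.mul_mem_left _ a hz) (Ideal.mul_mem_right _ _ hz')

theorem exists_eq_mul_algebraMap {V K Γ₀ ι : Type*} [CommRing V] [Field K] [Algebra V K]
    [LinearOrderedCommGroupWithZero Γ₀] {v : Valuation K Γ₀} (hv : v.Integers V) {s : Finset ι}
    (hs : s.Nonempty) (c : ι → K) :
    ∃ (c₀ : K) (r : ι → V), (∃ m ∈ s, IsUnit (r m)) ∧ ∀ j ∈ s, c j = c₀ * algebraMap V K (r j) := by
  obtain ⟨m, hm, hmax⟩ := s.exists_max_image (fun j ↦ v (c j)) hs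
  have hr (j : ι) : ∃ r : V, (j = m → r = 1) ∧ (j ∈ s → c j = c m * algebraMap V K r) := by
    rcases eq_or_ne j m with rfl | hjm
    · exact ⟨1, fun _ ↦ rfl, fun _ ↦ by rw [map_one, mul_one]⟩
    by_cases hj : j ∈ s
    · have hle : v (c j / c m) ≤ 1 := by
        rw [map_div₀]
        exact div_le_one_of_le₀ (hmax j hj) zero_le
      have hcm : c m = 0 → c j = 0 := fun h ↦
        v.zero_iff.mp (le_zero_iff.mp ((hmax j hj).trans (h ▸ (map_zero v).le)))
      obtain ⟨r, hr⟩ := hv.exists_of_le_one hle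
      exact ⟨r, fun h ↦ absurd h hjm, fun _ ↦ by rw [hr, mul_div_cancel_of_imp' hcm]⟩
    · exact ⟨0, fun h ↦ absurd h hjm, fun h ↦ absurd h hj⟩
  choose r hr₁ hr using hr
  exact ⟨c m, r, ⟨m, hm, hr₁ m rfl ▸ isUnit_one⟩, hr⟩

namespace ValuedLine

variable {V K L Γ₀ : Type*} [CommRing V] [Field K] [Algebra V K] [CommRing L] [Algebra K L]
  [LinearOrderedCommGroupWithZero Γ₀] {E : ValuedLine V K L Γ₀}

theorem w_natCast_of_ne_zero [Algebra ℚ V] {n : ℕ} (hn : n ≠ 0) : E.w (n : L) = 1 := by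
  have hnV : IsUnit (n : V) := by
    rw [← map_natCast (algebraMap ℚ V)]
    exact (IsUnit.mk0 (n : ℚ) (Nat.cast_ne_zero.mpr hn)).map _
  have := E.integers.one_of_isUnit hnV
  rwa [map_natCast, Valuation.comap_apply, map_natCast] at this

variable [Algebra V L]

variable (E) in
/-- The condition that `z` is a constant multiple of an element of `B` of value `1`. -/
def IsNormalizable (B : Subalgebra V L) (z : L) : Prop :=
  ∃ c : K, ∃ u ∈ B, E.w u = 1 ∧ z = c • u

variable (E) in
/-- The condition that `z` is a constant multiple of an element of `B` having an iterated derivative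
of value `1` with respect to `κ • δ`. -/
def HasUnitDerivative (B : Subalgebra V L) (κ : K) (z : L) : Prop :=
  ∃ c : K, ∃ u ∈ B, z = c • u ∧ ∃ i, E.w ((κ • E.δ)^[i] u) = 1

variable {B B' : Subalgebra V L} {κ : K} {z : L}

theorem IsNormalizable.mono (hz : E.IsNormalizable B z) (hB : B ≤ B') : E.IsNormalizable B' z :=
  let ⟨c, u, hu, h⟩ := hz
  ⟨c, u, hB hu, h⟩

theorem HasUnitDerivative.mono (hz : E.HasUnitDerivative B κ z) (hB : B ≤ B') :
    E.HasUnitDerivative B' κ z :=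
  let ⟨c, u, hu, h⟩ := hz
  ⟨c, u, hB hu, h⟩

theorem IsChart.isNormalizable_or_of_hasUnitDerivative (h : E.IsChart B κ) (hz : z ≠ 0)
    (hder : E.HasUnitDerivative B κ z) (hδz : E.IsNormalizable B (E.δ z)) :
    E.IsNormalizable B z ∨
      ∃ c : K, ∃ u ∈ B, z = c • u ∧ E.w u < 1 ∧ E.w ((κ • E.δ) u) = 1 := by
  obtain ⟨c, u, hu, rfl, i, hi⟩ := hder
  have hc : c ≠ 0 := (smul_ne_zero_iff.mp hz).1
  rcases (h.w_le_one u hu).eq_or_lt with hwu | hwu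
  · exact .inl ⟨c, u, hu, hwu, rfl⟩
  obtain - | i := i
  · exact absurd hi hwu.ne
  refine .inr ⟨c, u, hu, rfl, hwu, (h.w_le_one _ (h.smul_δ_mem u hu)).eq_of_not_lt fun hlt ↦ ?_⟩
  -- If `(κ • δ) u` has value less than `1`, then so have its derivatives, being multiples of it.
  obtain ⟨c', u', hu', hwu', hδ⟩ := hδz
  have hDu : (κ • E.δ) u = (κ * c⁻¹ * c') • u' := by
    rw [mul_smul, ← hδ, Derivation.map_smul, mul_smul, inv_smul_smul₀ hc, Derivation.smul_apply]
  have hu'i : (κ • E.δ)^[i] u' ∈ B := Set.MapsTo.iterate (s := (B : Set L)) h.smul_δ_mem i hu'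
  have hiter : (κ • E.δ)^[i] ((κ • E.δ) u) = (κ * c⁻¹ * c') • (κ • E.δ)^[i] u' := by
    rw [hDu]
    exact Function.Commute.iterate_left (fun y ↦ (κ • E.δ).map_smul _ y) i u'
  have hle : E.w ((κ • E.δ)^[i + 1] u) ≤ E.w ((κ • E.δ) u) := by
    rw [Function.iterate_succ_apply, hiter, hDu, E.w_smul, E.w_smul, hwu']
    exact mul_le_mul_right (h.w_le_one _ hu'i) _
  exact (hi ▸ hle.trans_lt hlt).false

variable [IsScalarTower V K L]

theorem w_algebraMap_eq_one {r : V} (hr : IsUnit r) : E.w (algebraMap V L r) = 1 := by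
  rw [IsScalarTower.algebraMap_apply V K L]
  exact E.integers.one_of_isUnit hr

theorem w_algebraMap_lt_one {r : V} (hr : ¬IsUnit r) : E.w (algebraMap V L r) < 1 := by
  refine (E.w_algebraMap_le_one r).lt_of_ne fun h ↦ hr (E.integers.isUnit_of_one' ?_)
  rwa [Valuation.comap_apply, ← IsScalarTower.algebraMap_apply V K L]

namespace IsChart

variable (h : E.IsChart B κ)

include h

/-- The derivation of a chart `B` over `V` induced by `κ • δ`. -/
def derivation : Derivation V B B :=
  restrictDerivation ((κ • E.δ).restrictScalars V) B h.smul_δ_mem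

theorem coe_iterate_derivation (i : ℕ) (b : B) :
    (h.derivation^[i] b : L) = (κ • E.δ)^[i] b :=
  coe_iterate_restrictDerivation h.smul_δ_mem i b

theorem w_lt_one_of_mem_map_maximalIdeal [IsLocalRing V] {b : B}
    (hb : b ∈ (IsLocalRing.maximalIdeal V).map (algebraMap V B)) : E.w (b : L) < 1 := by
  induction hb using Submodule.span_induction with
  | mem b hb =>
    obtain ⟨r, hr, rfl⟩ := hb
    exact w_algebraMap_lt_one hr
  | zero => rw [ZeroMemClass.coe_zero, map_zero]; exact zero_lt_one
  | add b c _ _ hb hc => exact E.w.map_add_lt hb hc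
  | smul a b _ hb =>
    rw [smul_eq_mul, MulMemClass.coe_mul, map_mul]
    exact mul_lt_one_of_nonneg_of_lt_one_right (h.w_le_one a a.2) zero_le hb

section Sum

variable [IsLocalRing V] [Algebra ℚ V] {x : B} {u : ℕ → B}
  (hx : E.w (h.derivation x : L) = 1)
  (hx' : h.derivation (h.derivation x) ∈ (IsLocalRing.maximalIdeal V).map (algebraMap V B))
  (hu : ∀ j, E.w (u j : L) = 1)
  (hu' : ∀ j, h.derivation (u j) ∈ (IsLocalRing.maximalIdeal V).map (algebraMap V B))

include hx hx' hu hu'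

/-- Modulo the maximal ideal of `V` the derivation kills the `u j`, so that it lowers the degree in
`x`; `d` is the degree there. -/
theorem exists_w_iterate_derivation_sum_eq_one {n : ℕ} {r : ℕ → V}
    (hr : ∃ m ∈ Finset.range (n + 1), IsUnit (r m)) :
    ∃ d, E.w (h.derivation^[d] (∑ j ∈ Finset.range (n + 1), r j • u j * x ^ j) : L) = 1 := by
  classical
  let U := {j ∈ Finset.range (n + 1) | IsUnit (r j)}
  obtain ⟨m, hm, hrm⟩ := hr
  have hU : U.Nonempty := ⟨m, Finset.mem_filter.mpr ⟨hm, hrm⟩⟩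
  obtain ⟨hd, hrd⟩ := Finset.mem_filter.mp (U.max'_mem hU)
  set d := U.max' hU
  set N := (IsLocalRing.maximalIdeal V).map (algebraMap V B)
  have hN (b : B) (hb : b ∈ N) : h.derivation b ∈ N := derivation_mem_map_algebraMap _ _ hb
  have hlow := iterate_derivation_sum_sub_mem hN hx' d (a := fun j ↦ r j • u j)
    fun j ↦ by rw [Derivation.map_smul]; exact N.smul_of_tower_mem _ (hu' j)
  have hhigh : ∑ j ∈ Finset.Ico (d + 1) (n + 1), r j • u j * x ^ j ∈ N := sum_mem fun j hj ↦ by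
    obtain ⟨hdj, hjn⟩ := Finset.mem_Ico.mp hj
    have hrj : ¬IsUnit (r j) := fun hrj ↦ (Nat.lt_of_succ_le hdj).not_ge
      (U.le_max' j (Finset.mem_filter.mpr ⟨Finset.mem_range.mpr hjn, hrj⟩))
    rw [Algebra.smul_def]
    exact N.mul_mem_right _ (N.mul_mem_right _ (Ideal.mem_map_of_mem _ hrj))
  have hmem := add_mem hlow (Set.MapsTo.iterate (s := (N : Set B)) hN d hhigh)
  rw [sub_add_eq_add_sub, ← iterate_map_add,
    Finset.sum_range_add_sum_Ico _ (Nat.succ_le_of_lt (Finset.mem_range.mp hd))] at hmem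
  have hlead : E.w ((d.factorial * (r d • u d) * h.derivation x ^ d : B) : L) = 1 := by
    have hwr : E.w ((algebraMap V B (r d) : B) : L) = 1 := w_algebraMap_eq_one hrd
    have hwd : E.w ((d.factorial : B) : L) = 1 := w_natCast_of_ne_zero d.factorial_ne_zero
    simp only [MulMemClass.coe_mul, SubmonoidClass.coe_pow, map_mul, map_pow, Algebra.smul_def, hwd,
      hwr, hu, hx, one_pow, mul_one]
  refine ⟨d, hlead ▸ Valuation.map_eq_of_sub_lt _ ?_⟩
  rw [hlead]
  exact h.w_lt_one_of_mem_map_maximalIdeal hmem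

theorem hasUnitDerivative_sum (c : ℕ → K) (n : ℕ) :
    E.HasUnitDerivative B κ (∑ j ∈ Finset.range (n + 1), c j • (u j * x ^ j : L)) := by
  obtain ⟨c₀, r, hr, hc⟩ :=
    exists_eq_mul_algebraMap E.integers ⟨n, Finset.self_mem_range_succ n⟩ c
  obtain ⟨d, hd⟩ := h.exists_w_iterate_derivation_sum_eq_one hx hx' hu hu' hr
  refine ⟨c₀, _, Subtype.prop _, ?_, d, (h.coe_iterate_derivation d _) ▸ hd⟩
  rw [AddSubmonoidClass.coe_finsetSum, Finset.smul_sum]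
  refine Finset.sum_congr rfl fun j hj ↦ ?_
  rw [hc j hj, mul_smul, algebraMap_smul, ← smul_mul_assoc]
  rfl

end Sum

end IsChart

end ValuedLine

end Content

section Induction

open Polynomial

theorem exists_eval_eq_and_natDegree_coeff_lt {K : Type*} [Field K] {f : K[X]}
    (hf : f.natDegree ≠ 0) (P : K[X]) :
    ∃ p : K[X][X], p.eval f = P ∧ ∀ j, (p.coeff j).natDegree < f.natDegree := by
  induction hn : P.degree using WellFoundedLT.induction generalizing P with
  | ind d ih =>
    rcases eq_or_ne P 0 with rfl | hP
    · exact ⟨0, eval_zero, fun j ↦ by rw [coeff_zero, natDegree_zero]; exact hf.bot_lt⟩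
    have hlt : (P / f).degree < d :=
      hn ▸ degree_div_lt hP (natDegree_pos_iff_degree_pos.mp hf.bot_lt)
    obtain ⟨p, hpf, hp⟩ := ih _ hlt (P / f) rfl
    refine ⟨C (P % f) + X * p, ?_, fun j ↦ ?_⟩
    · rw [eval_add, eval_C, eval_mul, eval_X, hpf, EuclideanDomain.mod_add_div]
    · rcases j with - | j
      · rw [coeff_add, coeff_C_zero, coeff_X_mul_zero, add_zero]
        exact natDegree_mod_lt P hf
      · rw [coeff_add, coeff_C_succ, coeff_X_mul, zero_add]
        exact hp j

namespace ValuedLine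

variable {V K L Γ₀ : Type*} [CommRing V] [Field K] [Algebra V K] [CommRing L] [Algebra K L]
  [LinearOrderedCommGroupWithZero Γ₀] {E : ValuedLine V K L Γ₀} [Algebra V L] [IsScalarTower V K L]
  {B B' : Subalgebra V L} {κ : K}

theorem IsChart.exists_isChart_of_w_lt_one [IsDomain V] (h : E.IsChart B κ) {u : L} (hu : u ∈ B)
    (hu₀ : E.w u ≠ 0) (hu₁ : E.w u < 1) (hδu : E.w ((κ • E.δ) u) = 1) :
    ∃ (e : V) (x : L) (B' : Subalgebra V L), ¬IsUnit e ∧ e • x = u ∧ E.w x = 1 ∧ B ≤ B' ∧ x ∈ B' ∧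
      E.IsChart B' (algebraMap V K e * κ) := by
  obtain ⟨c, hc, x, rfl, hx⟩ := E.exists_eq_smul_w_eq_one hu₀
  rw [E.w_smul, hx, mul_one] at hu₁
  obtain ⟨e, rfl⟩ := E.integers.exists_of_le_one hu₁.le
  obtain ⟨B₁, hB₁, h₁, t, ht, hat⟩ := h.exists_mul_eq_one (h.smul_δ_mem _ hu) hδu
  exact ⟨e, x, adjoinElement B₁ x, fun he ↦ hu₁.ne (E.integers.one_of_isUnit he),
    (algebraMap_smul K e x).symm, hx, hB₁.trans adjoinElement.le_self, adjoinElement.self_mem,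
    h₁.isChart_adjoinElement_of_smul_eq (hB₁ hu) ht hat (fun he ↦ hc (he ▸ map_zero _))
      (algebraMap_smul K e x).symm hx.le⟩

variable [IsLocalRing V] [Algebra ℚ V]

theorem IsChart.hasUnitDerivative_sum_smul (h : E.IsChart B κ) (hB : B ≤ B') {e : V}
    (h' : E.IsChart B' (algebraMap V K e * κ)) (he : ¬IsUnit e) {x : L} (hx : x ∈ B')
    (hex : e • x ∈ B) (hδ : E.w ((κ • E.δ) (e • x)) = 1) {z : ℕ → L}
    (hz : ∀ j, E.IsNormalizable B (z j)) (c : K) (n : ℕ) :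
    E.HasUnitDerivative B' (algebraMap V K e * κ)
      (∑ j ∈ Finset.range (n + 1), z j * (c • x) ^ j) := by
  choose a u hu hwu hz using hz
  have hδ' (y : L) : ((algebraMap V K e * κ) • E.δ) y = e • (κ • E.δ) y := by
    rw [mul_smul, Derivation.smul_apply, algebraMap_smul]
  have hδx : ((algebraMap V K e * κ) • E.δ) x = (κ • E.δ) (e • x) := by
    rw [hδ', ← algebraMap_smul K e, ← algebraMap_smul K e x, Derivation.map_smul]
  have hmem {b : B'} {y : L} (hy : y ∈ B) (hb : (b : L) = y) :
      h'.derivation b ∈ (IsLocalRing.maximalIdeal V).map (algebraMap V B') := by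
    have : h'.derivation b = e • ⟨_, hB (h.smul_δ_mem y hy)⟩ := Subtype.ext (hb ▸ hδ' b)
    rw [this, Algebra.smul_def]
    exact Ideal.mul_mem_right _ _ (Ideal.mem_map_of_mem _ he)
  have := h'.hasUnitDerivative_sum (x := ⟨x, hx⟩) (u := fun j ↦ ⟨u j, hB (hu j)⟩)
    ((congrArg E.w hδx).trans hδ) (hmem (h.smul_δ_mem _ hex) hδx) hwu (fun j ↦ hmem (hu j) rfl)
    (fun j ↦ a j * c ^ j) n
  convert this using 3 with j
  rw [hz, _root_.smul_pow, smul_mul_smul_comm]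

variable (E) in
/-- The condition that any finite set of polynomials in `S` becomes normalizable on some chart, on
which any given finite set of polynomials has unit derivatives. -/
def AdmitsCharts (S : Set K[X]) : Prop :=
  ∀ F ⊆ S, F.Finite → ∀ G : Set K[X], G.Finite → ∃ (B : Subalgebra V L) (κ : K),
    E.IsChart B κ ∧ (∀ P ∈ F, E.IsNormalizable B (E.ι P)) ∧ ∀ P ∈ G, E.HasUnitDerivative B κ (E.ι P)

theorem admitsCharts_natDegree_le_zero : E.AdmitsCharts {P | P.natDegree ≤ 0} := by
  intro F hF _ G _
  have h : E.IsChart _ 1 := isChart_adjoin_ι_X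
  refine ⟨_, 1, h, fun P hP ↦ ?_, fun P _ ↦ ?_⟩
  · refine ⟨P.coeff 0, 1, one_mem _, map_one _, ?_⟩
    rw [← Algebra.algebraMap_eq_smul_one, ← AlgHom.commutes E.ι, algebraMap_eq,
      ← eq_C_of_natDegree_le_zero (hF hP)]
  · have hδX : h.derivation ⟨E.ι X, h.ι_X_mem⟩ = 1 := Subtype.ext (by
      change ((1 : K) • E.δ) (E.ι X) = 1
      rw [one_smul, E.δ_ι, derivative_X, map_one])
    have hδ₁ : h.derivation 1 ∈ (IsLocalRing.maximalIdeal V).map (algebraMap V _) := by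
      rw [Derivation.map_one_eq_zero]
      exact zero_mem _
    have hP : E.ι P = ∑ j ∈ Finset.range (P.natDegree + 1), P.coeff j • (1 * E.ι X ^ j) := by
      conv_lhs => rw [P.as_sum_range_C_mul_X_pow]
      simp only [← smul_eq_C_mul, map_sum, map_smul, map_pow, one_mul]
    rw [hP]
    exact h.hasUnitDerivative_sum (x := ⟨E.ι X, h.ι_X_mem⟩) (u := 1) (hδX ▸ map_one E.w)
      (hδX ▸ hδ₁) (fun _ ↦ map_one E.w) (fun _ ↦ hδ₁) P.coeff P.natDegree

variable [IsDomain V]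

theorem admitsCharts_insert {S : Set K[X]} (hS : E.AdmitsCharts S) {f : K[X]}
    (hf : f.natDegree ≠ 0) (hw : E.w (E.ι f) ≠ 0) (hlt : ∀ P, P.natDegree < f.natDegree → P ∈ S) :
    E.AdmitsCharts (insert f S) := by
  intro F hF hFfin G hG
  choose p hpf hp using exists_eval_eq_and_natDegree_coeff_lt hf
  let F' : Set K[X] := insert (derivative f) (F \ {f} ∪ ⋃ P ∈ G, Set.range (p P).coeff)
  have hF'S : F' ⊆ S := Set.insert_subset (hlt _ (natDegree_derivative_lt hf)) <|
    Set.union_subset (Set.sdiff_singleton_subset_iff.mpr hF) <|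
    Set.iUnion₂_subset fun P _ ↦ Set.range_subset_iff.mpr fun j ↦ hlt _ (hp P j)
  have hF'fin : F'.Finite :=
    (hFfin.sdiff.union (hG.biUnion fun P _ ↦ finite_range_coeff (p P))).insert _
  obtain ⟨B, κ, h, hnorm, hunit⟩ := hS F' hF'S hF'fin (insert f G) (hG.insert f)
  have hnormF : ∀ P ∈ F, P ≠ f → E.IsNormalizable B (E.ι P) := fun P hP hPf ↦
    hnorm P (.inr (.inl ⟨hP, hPf⟩))
  have hf₀ : E.ι f ≠ 0 := fun h₀ ↦ hw (by rw [h₀, map_zero])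
  rcases h.isNormalizable_or_of_hasUnitDerivative hf₀ (hunit f (.inl rfl))
    (E.δ_ι f ▸ hnorm _ (.inl rfl)) with hnormf | ⟨c, u, hu, hfu, hu₁, hδu⟩
  · refine ⟨B, κ, h, fun P hP ↦ ?_, fun P hP ↦ hunit P (.inr hP)⟩
    rcases eq_or_ne P f with rfl | hPf
    exacts [hnormf, hnormF P hP hPf]
  rw [hfu, E.w_smul] at hw
  obtain ⟨e, x, B', he, rfl, hx, hB, hxB', h'⟩ :=
    h.exists_isChart_of_w_lt_one hu (right_ne_zero_of_mul hw) hu₁ hδu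
  have hfx : E.ι f = (c * algebraMap V K e) • x := by rw [hfu, mul_smul, algebraMap_smul]
  refine ⟨B', _, h', fun P hP ↦ ?_, fun P hP ↦ ?_⟩
  · rcases eq_or_ne P f with rfl | hPf
    exacts [⟨_, x, hxB', hx, hfx⟩, (hnormF P hP hPf).mono hB]
  · rw [← hpf P, eval_eq_sum_range, map_sum]
    simp only [map_mul, map_pow, hfx]
    exact h.hasUnitDerivative_sum_smul hB h' he hxB' hu hδu
      (fun j ↦ hnorm _ (.inr (.inr (Set.mem_biUnion hP ⟨j, rfl⟩)))) _ _

theorem admitsCharts_natDegree_le {n : ℕ} (hn : ∀ P ≠ 0, P.natDegree ≤ n → E.w (E.ι P) ≠ 0) :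
    E.AdmitsCharts {P | P.natDegree ≤ n} := by
  induction n with
  | zero => exact admitsCharts_natDegree_le_zero
  | succ n ih =>
    intro F hF hFfin
    suffices h : E.AdmitsCharts (F ∪ {P | P.natDegree ≤ n}) from h F Set.subset_union_left hFfin
    induction F, hFfin using Set.Finite.induction_on with
    | empty =>
      rw [Set.empty_union]
      exact ih fun P hP hPn ↦ hn P hP (Nat.le_succ_of_le hPn)
    | @insert f F _ _ ihF =>
      obtain ⟨hf, hF⟩ := Set.insert_subset_iff.mp hF
      rw [Set.insert_union]
      by_cases hfn : f.natDegree ≤ n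
      · rw [Set.insert_eq_of_mem (.inr hfn)]
        exact ihF hF
      · have hf' : f.natDegree ≠ 0 := Nat.ne_zero_of_lt (not_le.mp hfn)
        exact admitsCharts_insert (ihF hF) hf' (hn f (ne_zero_of_natDegree_gt (not_le.mp hfn)) hf)
          fun P hP ↦ .inr (Nat.le_of_lt_succ (hP.trans_le hf))

end ValuedLine

end Induction

section SmoothRange

open Polynomial

namespace ValuedLine

variable {V K L Γ₀ : Type*} [CommRing V] [Field K] [Algebra V K] [CommRing L] [Algebra K L]
  [LinearOrderedCommGroupWithZero Γ₀] {E : ValuedLine V K L Γ₀}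

theorem exists_forall_w_ι_eq_zero_iff_dvd : ∃ f : K[X], ∀ P, E.w (E.ι P) = 0 ↔ f ∣ P := by
  obtain ⟨f, hf⟩ := IsPrincipalIdealRing.principal (E.w.supp.comap E.ι)
  exact ⟨f, fun P ↦ by rw [← Ideal.mem_span_singleton, ← Ideal.submodule_span_eq, ← hf]; rfl⟩

theorem natDegree_ne_zero_of_w_ι_eq_zero_iff {f : K[X]}
    (hf : ∀ P, E.w (E.ι P) = 0 ↔ f ∣ P) (hf₀ : f ≠ 0) : f.natDegree ≠ 0 := by
  intro hdeg
  have : E.w (E.ι 1) = 0 := (hf 1).mpr (isUnit_iff_dvd_one.mp (isUnit_iff_degree_eq_zero.mpr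
    (by rw [degree_eq_natDegree hf₀, hdeg, Nat.cast_zero])))
  rw [map_one, map_one] at this
  exact one_ne_zero this

theorem ι_sub_ι_mod_mem_supp {f : K[X]} (hf : ∀ P, E.w (E.ι P) = 0 ↔ f ∣ P) (P : K[X]) :
    E.ι P - E.ι (P % f) ∈ E.w.supp := by
  rw [Valuation.mem_supp_iff, ← map_sub, hf, EuclideanDomain.mod_eq_sub_mul_div, sub_sub_cancel]
  exact dvd_mul_right _ _

theorem w_ι_mod {f : K[X]} (hf : ∀ P, E.w (E.ι P) = 0 ↔ f ∣ P) (P : K[X]) :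
    E.w (E.ι (P % f)) = E.w (E.ι P) := by
  rw [← Valuation.map_add_supp _ _ (ι_sub_ι_mod_mem_supp hf P), add_sub_cancel]

variable [Algebra V L] {B : Subalgebra V L} {κ : K}

theorem IsChart.exists_eq_mul_ι_of_w_eq_zero {f : K[X]} (hf : ∀ P, E.w (E.ι P) = 0 ↔ f ∣ P)
    (h : E.IsChart B κ) {b : L} (hb : b ∈ B) (hw : E.w b = 0) :
    ∃ t ∈ B, ∃ P, b = t * E.ι (f * P) := by
  obtain ⟨t, htB, ht, Q, rfl⟩ := h.exists_eq_mul_ι b hb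
  rw [map_mul, mul_eq_zero, or_iff_right (ht.map E.w).ne_zero, hf] at hw
  obtain ⟨P, rfl⟩ := hw
  exact ⟨t, htB, P, rfl⟩

variable [IsScalarTower V K L]

theorem IsChart.exists_forall_mul_eq_one (h : E.IsChart B κ) {S : Set L} (hS : S.Finite)
    (hSB : S ⊆ B) (hw : ∀ u ∈ S, E.w u = 1) :
    ∃ B', B ≤ B' ∧ E.IsChart B' κ ∧ ∀ u ∈ S, ∃ t ∈ B', u * t = 1 := by
  classical
  lift S to Finset L using hS
  have hwS : E.w (∏ u ∈ S, u) = 1 := by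
    rw [map_prod]
    exact Finset.prod_eq_one hw
  obtain ⟨B', hB, h', t, ht, hSt⟩ := h.exists_mul_eq_one (prod_mem hSB) hwS
  refine ⟨B', hB, h', fun u hu ↦ ⟨(∏ v ∈ S.erase u, v) * t, mul_mem ?_ ht, ?_⟩⟩
  · exact prod_mem fun v hv ↦ hB (hSB (Finset.mem_of_mem_erase hv))
  · rw [← mul_assoc, Finset.mul_prod_erase S (fun v ↦ v) hu, hSt]

theorem IsChart.exists_eq_mul_of_w_le (h : E.IsChart B κ) {S : Set L} (hS : S.Finite)
    (hnorm : ∀ z ∈ S, E.IsNormalizable B z) :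
    ∃ B', B ≤ B' ∧ E.IsChart B' κ ∧ ∀ y ∈ S, ∀ z ∈ S, E.w y ≤ E.w z → ∃ b ∈ B', y = b * z := by
  choose! c u hu hwu hz using hnorm
  obtain ⟨B', hB, h', hinv⟩ := h.exists_forall_mul_eq_one (hS.image u)
    (Set.image_subset_iff.mpr hu) (Set.forall_mem_image.mpr hwu)
  refine ⟨B', hB, h', fun y hyS z hzS hle ↦ ?_⟩
  obtain ⟨t, ht, hut⟩ := hinv _ (Set.mem_image_of_mem u hzS)
  rw [hz y hyS, hz z hzS, E.w_smul, E.w_smul, hwu y hyS, hwu z hzS, mul_one, mul_one] at hle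
  have hc : c z = 0 → c y = 0 := fun h₀ ↦
    E.baseValuation.zero_iff.mp (le_zero_iff.mp (hle.trans (h₀ ▸ (map_zero _).le)))
  have hle₁ : E.baseValuation (c y / c z) ≤ 1 := by
    rw [map_div₀]
    exact div_le_one_of_le₀ hle zero_le
  refine ⟨(c y / c z) • (u y * t), smul_mem hle₁ (mul_mem (hB (hu y hyS)) ht), ?_⟩
  calc y = c y • u y := hz y hyS
    _ = (c y / c z * c z) • (u y * t * u z) := by
      rw [div_mul_cancel_of_imp hc, mul_assoc, mul_comm t, hut, mul_one]
    _ = (c y / c z) • (u y * t) * z := by rw [← smul_mul_smul_comm, ← hz z hzS]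

section Support

variable {f : K[X]} (hf : ∀ P, E.w (E.ι P) = 0 ↔ f ∣ P)

include hf

theorem admitsCharts_natDegree_lt [IsDomain V] [IsLocalRing V] [Algebra ℚ V] :
    E.AdmitsCharts {P | f ≠ 0 → P.natDegree < f.natDegree} := by
  intro F hF hFfin
  obtain ⟨n, hn, hFn⟩ : ∃ n, (f ≠ 0 → n < f.natDegree) ∧ F ⊆ {P | P.natDegree ≤ n} := by
    rcases eq_or_ne f 0 with rfl | hf₀
    · obtain ⟨n, hn⟩ := (hFfin.image natDegree).bddAbove
      exact ⟨n, fun h ↦ absurd rfl h, fun P hP ↦ hn ⟨P, hP, rfl⟩⟩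
    · exact ⟨f.natDegree - 1,
        fun _ ↦ Nat.sub_one_lt (natDegree_ne_zero_of_w_ι_eq_zero_iff hf hf₀),
        fun P hP ↦ Nat.le_sub_one_of_lt (hF hP hf₀)⟩
  refine admitsCharts_natDegree_le (fun P hP hPn hw ↦ ?_) F hFn hFfin
  have hdvd := (hf P).mp hw
  exact ((natDegree_le_of_dvd hdvd hP).trans hPn).not_gt (hn (ne_zero_of_dvd_ne_zero hP hdvd))

theorem exists_isChart_forall_exists_w_sub_eq_zero [IsDomain V] [IsLocalRing V] [Algebra ℚ V]
    {S : Set L} (hS : S.Finite) (hle : ∀ x ∈ S, E.w x ≤ 1) :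
    ∃ (B : Subalgebra V L) (κ : K), E.IsChart B κ ∧ E.IsNormalizable B (E.ι (derivative f)) ∧
      E.HasUnitDerivative B κ (E.ι f) ∧ ∀ x ∈ S, ∃ b ∈ B, E.w (x - b) = 0 := by
  choose P Q hQ hPQ using E.exists_ι_mul_eq
  have hdeg (hf₀ : f ≠ 0) : f.natDegree ≠ 0 := natDegree_ne_zero_of_w_ι_eq_zero_iff hf hf₀
  let F : Set K[X] := insert (derivative f) ((P · % f) '' S ∪ (Q · % f) '' S)
  have hFfin : F.Finite := ((hS.image _).union (hS.image _)).insert _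
  have hF : F ⊆ {R | f ≠ 0 → R.natDegree < f.natDegree} := by
    rintro _ (rfl | ⟨x, -, rfl⟩ | ⟨x, -, rfl⟩) hf₀
    exacts [natDegree_derivative_lt (hdeg hf₀), natDegree_mod_lt _ (hdeg hf₀),
      natDegree_mod_lt _ (hdeg hf₀)]
  obtain ⟨B, κ, h, hnorm, hunit⟩ :=
    admitsCharts_natDegree_lt hf F hF hFfin {f} (Set.finite_singleton f)
  obtain ⟨B', hB, h', hdvd⟩ :=
    h.exists_eq_mul_of_w_le (hFfin.image E.ι) (Set.forall_mem_image.mpr hnorm)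
  refine ⟨B', κ, h', (hnorm _ (.inl rfl)).mono hB, (hunit f rfl).mono hB, fun x hx ↦ ?_⟩
  have hwPQ : E.w (E.ι (P x % f)) ≤ E.w (E.ι (Q x % f)) := by
    rw [w_ι_mod hf, w_ι_mod hf, ← hPQ, map_mul]
    exact mul_le_of_le_one_right' (hle x hx)
  obtain ⟨b, hb, hPb⟩ := hdvd _ (Set.mem_image_of_mem _ (.inr (.inl ⟨x, hx, rfl⟩))) _
    (Set.mem_image_of_mem _ (.inr (.inr ⟨x, hx, rfl⟩))) hwPQ
  have hQxb : E.ι (Q x) * (x - b) ∈ E.w.supp := by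
    have : E.ι (Q x) * (x - b) =
        E.ι (P x) - E.ι (P x % f) - (E.ι (Q x) - E.ι (Q x % f)) * b := by
      rw [mul_sub, hPQ, hPb]
      ring
    rw [this]
    exact sub_mem (ι_sub_ι_mod_mem_supp hf _)
      (Ideal.mul_mem_right _ _ (ι_sub_ι_mod_mem_supp hf _))
  rw [Valuation.mem_supp_iff, map_mul] at hQxb
  exact ⟨b, hb, (mul_eq_zero.mp hQxb).resolve_left (hQ x)⟩

variable {M : Type*} [CommRing M] [Algebra V M] {φ : L →ₐ[V] M} (hφ : ∀ x, φ x = 0 ↔ E.w x = 0)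

include hφ

theorem IsChart.smooth_range_of_isUnit [IsDomain V] [IsFractionRing V K] (h : E.IsChart B κ)
    {c : K} {u : L} (hu : u ∈ B) (hfu : E.ι f = c • u) (hwu : E.w u = 0) {t : L} (ht : t ∈ B)
    (hut : (κ • E.δ) u * t = 1) : Algebra.Smooth V (φ.comp B.val).range := by
  have := h.smooth
  have hDu : IsUnit (h.derivation ⟨u, hu⟩) := .of_mul_eq_one ⟨t, ht⟩ (Subtype.ext hut)
  refine smooth_range_of_quotient_span_singleton
    (smooth_quotient_span_singleton_of_isUnit_derivation h.derivation hDu) ((hφ u).mpr hwu)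
    fun ⟨b, hb⟩ hφb ↦ ?_
  obtain ⟨s, hs, P, rfl⟩ := h.exists_eq_mul_ι_of_w_eq_zero hf hb ((hφ b).mp hφb)
  obtain ⟨e, he, heP⟩ := h.exists_smul_ι_mem (c • P)
  refine ⟨e, he, ⟨s, hs⟩ * ⟨_, heP⟩, Subtype.ext ?_⟩
  change e • (s * E.ι (f * P)) = u * (s * e • E.ι (c • P))
  rw [map_mul, hfu, map_smul]
  simp only [smul_mul_assoc, mul_smul_comm, mul_left_comm s]

theorem IsChart.exists_smooth_range [IsDomain V] [IsFractionRing V K] (h : E.IsChart B κ)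
    (hnorm : E.IsNormalizable B (E.ι (derivative f))) (hunit : E.HasUnitDerivative B κ (E.ι f)) :
    ∃ B', B ≤ B' ∧ E.IsChart B' κ ∧ Algebra.Smooth V (φ.comp B'.val).range := by
  rcases eq_or_ne f 0 with rfl | hf₀
  · have := h.smooth
    refine ⟨B, le_rfl, h, .of_equiv (AlgEquiv.ofInjective (φ.comp B.val) ?_)⟩
    refine (injective_iff_map_eq_zero _).mpr fun ⟨b, hb⟩ hφb ↦ Subtype.ext ?_
    obtain ⟨t, -, P, rfl⟩ := h.exists_eq_mul_ι_of_w_eq_zero hf hb ((hφ b).mp hφb)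
    change t * E.ι (0 * P) = 0
    rw [zero_mul, map_zero, mul_zero]
  have hιf : E.ι f ≠ 0 := (map_ne_zero_iff _ E.ι_injective).mpr hf₀
  have hwf : ∀ {c : K} {u : L}, E.ι f = c • u → E.w u = 0 := by
    intro c u hfu
    have := (hf f).mpr dvd_rfl
    rw [hfu, E.w_smul] at this
    refine (mul_eq_zero.mp this).resolve_left (E.baseValuation.ne_zero_iff.mpr ?_)
    rintro rfl
    exact hιf (hfu.trans (zero_smul _ _))
  rcases h.isNormalizable_or_of_hasUnitDerivative hιf hunit (E.δ_ι f ▸ hnorm) with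
    ⟨c, u, -, hwu, hfu⟩ | ⟨c, u, hu, hfu, -, hδu⟩
  · exact absurd ((hwf hfu).symm.trans hwu) zero_ne_one
  obtain ⟨B', hB, h', t, ht, hut⟩ := h.exists_mul_eq_one (h.smul_δ_mem u hu) hδu
  exact ⟨B', hB, h', h'.smooth_range_of_isUnit hf hφ (hB hu) hfu (hwf hfu) ht hut⟩

end Support

variable (E) in
theorem exists_smooth_range [IsDomain V] [IsFractionRing V K] [IsLocalRing V] [Algebra ℚ V]
    {M : Type*} [CommRing M] [Algebra V M] {φ : L →ₐ[V] M} (hφ : ∀ x, φ x = 0 ↔ E.w x = 0)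
    {S : Set L} (hS : S.Finite) (hle : ∀ x ∈ S, E.w x ≤ 1) :
    ∃ B : Subalgebra V L, (∀ b ∈ B, E.w b ≤ 1) ∧ Algebra.Smooth V (φ.comp B.val).range ∧
      φ '' S ⊆ (φ.comp B.val).range := by
  obtain ⟨f, hf⟩ := exists_forall_w_ι_eq_zero_iff_dvd (E := E)
  obtain ⟨B, κ, h, hnorm, hunit, hsub⟩ := exists_isChart_forall_exists_w_sub_eq_zero hf hS hle
  obtain ⟨B', hB, h', hsmooth⟩ := h.exists_smooth_range hf hφ hnorm hunit
  refine ⟨B', h'.w_le_one, hsmooth, Set.image_subset_iff.mpr fun x hx ↦ ?_⟩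
  obtain ⟨b, hb, hxb⟩ := hsub x hx
  have hφxb : φ x - φ b = 0 := by rw [← map_sub, hφ, hxb]
  exact ⟨⟨b, hB hb⟩, (sub_eq_zero.mp hφxb).symm⟩

end ValuedLine

end SmoothRange

section LineThroughPoint

open Polynomial IntermediateField
open scoped KaehlerDifferential

theorem exists_derivation_extend_of_isLocalization {R S T : Type*} [CommRing R] [CommRing S]
    [CommRing T] [Algebra R S] [Algebra R T] [Algebra S T] [IsScalarTower R S T] (M : Submonoid S)
    [IsLocalization M T] (D : Derivation R S S) :
    ∃ D' : Derivation R T T, ∀ s, D' (algebraMap S T s) = algebraMap S T (D s) := by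
  have := Algebra.FormallyEtale.of_isLocalization (Rₘ := T) M
  let e := KaehlerDifferential.tensorKaehlerEquivOfFormallyEtale R S T
  let l : Ω[S⁄R] →ₗ[S] T := Algebra.linearMap S T ∘ₗ D.liftKaehlerDifferential
  refine ⟨(l.liftBaseChange T ∘ₗ e.symm.toLinearMap).compDer (KaehlerDifferential.D R T),
    fun s ↦ ?_⟩
  calc l.liftBaseChange T (e.symm (KaehlerDifferential.D R T (algebraMap S T s)))
      = l (KaehlerDifferential.D R S s) := by
        rw [KaehlerDifferential.tensorKaehlerEquivOfFormallyEtale_symm_D_algebraMap,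
          LinearMap.liftBaseChange_tmul, one_smul]
    _ = algebraMap S T (D s) := congrArg (algebraMap S T) (D.liftKaehlerDifferential_comp_D s)

section Field

variable {V K K' Γ₀ : Type*} [CommRing V] [Field K] [Field K'] [Algebra V K] [Algebra K K']
  [LinearOrderedCommGroupWithZero Γ₀] {v : Valuation K' Γ₀}
  (hv : (v.comap (algebraMap K K')).Integers V)
  (hval : ∀ x, ∃ c : K, v (algebraMap K K' c) = v x) {y : K'} (hy : v y ≤ 1)

include hv hval hy

theorem exists_valuedLine (L : Type*) [CommRing L] [Algebra K[X] L] [Algebra K L]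
    [IsScalarTower K K[X] L] [(RingHom.ker (aeval (R := K) y)).IsPrime]
    [IsLocalization.AtPrime L (RingHom.ker (aeval (R := K) y))] :
    ∃ (E : ValuedLine V K L Γ₀) (φ : L →ₐ[K] K'),
      (∀ x, E.w x = v (φ x)) ∧ ∀ P, φ (E.ι P) = aeval y P := by
  let M := (RingHom.ker (aeval (R := K) y)).primeCompl
  have hM : ∀ Q : M, aeval y (Q : K[X]) ≠ 0 := fun Q ↦ Q.2
  let φ : L →ₐ[K] K' := IsLocalization.liftAlgHom (M := M) (f := aeval y)
    fun Q ↦ isUnit_iff_ne_zero.mpr (hM Q)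
  have hφ : ∀ P, φ (algebraMap K[X] L P) = aeval y P := fun P ↦ IsLocalization.lift_eq _ P
  obtain ⟨δ, hδ⟩ := exists_derivation_extend_of_isLocalization (T := L) M
    (derivative' : Derivation K K[X] K[X])
  refine ⟨{
      ι := IsScalarTower.toAlgHom K K[X] L
      δ := δ
      w := v.comap φ.toRingHom
      ι_injective := IsLocalization.injective L (M := M) fun P hP ↦ ?_
      exists_ι_mul_eq := fun x ↦ ?_
      δ_ι := hδ
      w_X_le_one := ?_
      integers := ?_
      exists_w_algebraMap_eq := fun x ↦ ?_
      isUnit_of_w_ne_zero := fun x hx ↦ ?_ }, φ, fun _ ↦ rfl, hφ⟩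
  · refine mem_nonZeroDivisors_of_ne_zero ?_
    rintro rfl
    exact hM ⟨0, hP⟩ (map_zero _)
  · obtain ⟨⟨P, Q⟩, hPQ⟩ := IsLocalization.surj M x
    refine ⟨P, Q, ?_, (mul_comm _ _).trans hPQ⟩
    change v (φ (algebraMap K[X] L Q)) ≠ 0
    rw [hφ, Valuation.ne_zero_iff]
    exact hM Q
  · change v (φ (algebraMap K[X] L X)) ≤ 1
    rwa [hφ, aeval_X]
  · rwa [← Valuation.comap_comp, show φ.toRingHom.comp (algebraMap K L) = algebraMap K K' from
      φ.comp_algebraMap]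
  · obtain ⟨c, hc⟩ := hval (φ x)
    exact ⟨c, (congrArg v (φ.commutes c)).trans hc⟩
  · obtain ⟨⟨P, Q⟩, hPQ⟩ := IsLocalization.surj M x
    have hφx : φ x ≠ 0 := v.ne_zero_iff.mp hx
    have hP : aeval y P ≠ 0 := by
      rw [← hφ, ← hPQ, map_mul, hφ]
      exact mul_ne_zero hφx (hM Q)
    exact isUnit_of_mul_isUnit_left (hPQ ▸ IsLocalization.map_units L (⟨P, hP⟩ : M))

theorem exists_smooth_of_subset_adjoin_simple [IsDomain V] [IsFractionRing V K] [IsLocalRing V]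
    [Algebra ℚ V] [Algebra V K'] [IsScalarTower V K K'] {S : Set K'} (hS : S.Finite)
    (hSy : S ⊆ K⟮y⟯) (hle : ∀ x ∈ S, v x ≤ 1) :
    ∃ C : Subalgebra V K', Algebra.Smooth V C ∧ (∀ c ∈ C, v c ≤ 1) ∧ S ⊆ C := by
  have : (RingHom.ker (aeval (R := K) y)).IsPrime := RingHom.ker_isPrime _
  let L := Localization.AtPrime (RingHom.ker (aeval (R := K) y))
  obtain ⟨E, φ, hw, hφ⟩ := exists_valuedLine hv hval hy L
  have hlift : ∀ x ∈ S, ∃ z, φ z = x := by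
    intro x hx
    obtain ⟨P, Q, rfl⟩ := mem_adjoin_simple_iff K x |>.mp (hSy hx)
    rcases eq_or_ne (aeval y Q) 0 with hQ | hQ
    · exact ⟨0, by rw [hQ, div_zero, map_zero]⟩
    obtain ⟨t, ht⟩ := (E.isUnit_of_w_ne_zero (E.ι Q)
      (by rwa [hw, v.ne_zero_iff, hφ])).exists_right_inv
    refine ⟨E.ι P * t, eq_div_of_mul_eq hQ ?_⟩
    rw [← hφ, ← hφ, ← map_mul, mul_assoc, mul_comm t, ht, mul_one]
  choose! z hz using hlift
  obtain ⟨B, hB, hsmooth, hSB⟩ := E.exists_smooth_range (φ := φ.restrictScalars V)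
    (fun x ↦ by rw [hw, v.zero_iff]; rfl) (hS.image z)
    (Set.forall_mem_image.mpr fun x hx ↦ by rw [hw, hz x hx]; exact hle x hx)
  refine ⟨_, hsmooth, ?_, fun x hx ↦ ?_⟩
  · rintro _ ⟨b, rfl⟩
    exact (hw b).symm.trans_le (hB b b.2)
  · exact hSB ⟨z x, ⟨x, hx, rfl⟩, hz x hx⟩

end Field

end LineThroughPoint

section SameValueGroup

open Polynomial IntermediateField TensorProduct

/-- The elements of the domain `V'` that lie in the field generated over `V` by `y`, as a
`V`-subalgebra of `V'`. -/
def fractionsIn (V : Type*) {V' : Type*} [CommRing V] [CommRing V'] [IsDomain V'] [Algebra V V']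
    (y : V') : Subalgebra V V' where
  carrier := {x | ∃ p q : V[X], aeval y q ≠ 0 ∧ aeval y q * x = aeval y p}
  mul_mem' := by
    rintro a b ⟨p, q, hq, h⟩ ⟨p', q', hq', h'⟩
    refine ⟨p * p', q * q', by rw [map_mul]; exact mul_ne_zero hq hq', ?_⟩
    rw [map_mul, map_mul, ← h, ← h']
    ring
  add_mem' := by
    rintro a b ⟨p, q, hq, h⟩ ⟨p', q', hq', h'⟩
    refine ⟨p * q' + q * p', q * q', by rw [map_mul]; exact mul_ne_zero hq hq', ?_⟩
    rw [map_mul, map_add, map_mul, map_mul, ← h, ← h']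
    ring
  algebraMap_mem' a := ⟨C a, 1, by simp, by simp⟩

namespace fractionsIn

variable {V V' : Type*} [CommRing V] [CommRing V'] [IsDomain V'] [Algebra V V'] {y : V'}

theorem self_mem : y ∈ fractionsIn V y :=
  ⟨X, 1, by simp, by simp⟩

theorem mem_of_mul_eq {a b c : V'} (ha : a ∈ fractionsIn V y) (hb : b ∈ fractionsIn V y)
    (ha₀ : a ≠ 0) (h : a * c = b) : c ∈ fractionsIn V y := by
  obtain ⟨p, q, hq, hpq⟩ := ha
  obtain ⟨p', q', hq', hpq'⟩ := hb
  refine ⟨q * p', q' * p, ?_, ?_⟩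
  · rw [map_mul, ← hpq]
    exact mul_ne_zero hq' (mul_ne_zero hq ha₀)
  · rw [map_mul, map_mul, ← hpq, ← hpq', ← h]
    ring

theorem mem_fractionsIn_self (x : fractionsIn V y) :
    x ∈ fractionsIn V (⟨y, self_mem⟩ : fractionsIn V y) := by
  obtain ⟨x, p, q, hq, hpq⟩ := x
  have hcoe : ∀ r : V[X], (aeval (⟨y, self_mem⟩ : fractionsIn V y) r : V') = aeval y r :=
    fun r ↦ (aeval_algHom_apply (fractionsIn V y).val _ r).symm
  refine ⟨p, q, fun h₀ ↦ hq ?_, Subtype.ext ?_⟩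
  · rw [← hcoe, h₀, ZeroMemClass.coe_zero]
  · rw [MulMemClass.coe_mul, hcoe, hcoe, hpq]

theorem valuationRing [ValuationRing V'] : ValuationRing (fractionsIn V y) where
  cond' a b := by
    have lift {a b : fractionsIn V y} {c : V'} (h : (a : V') * c = b) : ∃ c, a * c = b := by
      by_cases ha : (a : V') = 0
      · exact ⟨0, Subtype.ext (by rw [mul_zero, ← h, ha, zero_mul, ZeroMemClass.coe_zero])⟩
      · exact ⟨⟨c, mem_of_mul_eq a.2 b.2 ha h⟩, Subtype.ext h⟩
    obtain ⟨c, h | h⟩ := ValuationRing.cond (a : V') b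
    · exact (lift h).imp fun _ ↦ .inl
    · exact (lift h).imp fun _ ↦ .inr

theorem isUnit_of_isUnit_coe (a : fractionsIn V y) (ha : IsUnit (a : V')) : IsUnit a := by
  obtain ⟨c, hc⟩ := ha.exists_right_inv
  exact .of_mul_eq_one ⟨c, mem_of_mul_eq a.2 (one_mem _) ha.ne_zero hc⟩ (Subtype.ext hc)

theorem algebraMap_mem_adjoin_simple {K K' : Type*} [Field K] [Field K'] [Algebra V K]
    [Algebra V' K'] [FaithfulSMul V' K'] [Algebra V K'] [IsScalarTower V V' K'] [Algebra K K']
    [IsScalarTower V K K'] {x : V'} (hx : x ∈ fractionsIn V y) :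
    algebraMap V' K' x ∈ K⟮algebraMap V' K' y⟯ := by
  obtain ⟨p, q, hq, hpq⟩ := hx
  refine (mem_adjoin_simple_iff K _).mpr
    ⟨p.map (algebraMap V K), q.map (algebraMap V K), eq_div_of_mul_eq ?_ ?_⟩
  · rwa [aeval_map_algebraMap, aeval_algebraMap_apply, Ne, FaithfulSMul.algebraMap_eq_zero_iff]
  · rw [aeval_map_algebraMap, aeval_algebraMap_apply, aeval_map_algebraMap,
      aeval_algebraMap_apply, ← map_mul, mul_comm, hpq]

end fractionsIn

theorem integers_valuationRing_valuation {A K : Type*} [CommRing A] [IsDomain A] [ValuationRing A]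
    [Field K] [Algebra A K] [IsFractionRing A K] :
    (ValuationRing.valuation A K).Integers A where
  hom_inj := IsFractionRing.injective A K
  map_le_one a := (ValuationRing.mem_integer_iff A K _).mpr ⟨a, rfl⟩
  exists_of_le_one  _ := (ValuationRing.mem_integer_iff A K _).mp

/-- A local extension of rings inducing an isomorphism of value groups, without any condition on
the residue fields. -/
structure HasSameValueGroup (V V' : Type*) [CommRing V] [CommRing V'] [Algebra V V'] : Prop where
  injective : Function.Injective (algebraMap V V')
  isUnit_of_isUnit_algebraMap : ∀ a : V, IsUnit (algebraMap V V' a) → IsUnit a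
  exists_associated : ∀ x : V', x ≠ 0 → ∃ a b : V, a ≠ 0 ∧ b ≠ 0 ∧
    Associated (algebraMap V V' a) (x * algebraMap V V' b)

theorem IsImmediateExtension.hasSameValueGroup {V V' : Type*} [CommRing V] [IsLocalRing V]
    [CommRing V'] [IsLocalRing V'] [Algebra V V'] (h : IsImmediateExtension V V') :
    HasSameValueGroup V V' where
  injective := h.1
  isUnit_of_isUnit_algebraMap a ha := by
    by_contra hna
    exact (h.2.1 a).mpr hna ha
  exists_associated := h.2.2.2

namespace HasSameValueGroup

section FractionsIn

variable {V V' : Type*} [CommRing V] [CommRing V'] [IsDomain V'] [Algebra V V']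

theorem fractionsIn_left (h : HasSameValueGroup V V') (y : V') :
    HasSameValueGroup V (fractionsIn V y) where
  injective := .of_comp (f := (fractionsIn V y).val) h.injective
  isUnit_of_isUnit_algebraMap a ha :=
    h.isUnit_of_isUnit_algebraMap a (ha.map (fractionsIn V y).val)
  exists_associated x hx := by
    obtain ⟨a, b, ha, hb, ε, hε⟩ := h.exists_associated x
      (by rwa [Ne, ZeroMemClass.coe_eq_zero])
    have hεmem : (ε : V') ∈ fractionsIn V y :=
      fractionsIn.mem_of_mul_eq (algebraMap_mem _ a) (mul_mem x.2 (algebraMap_mem _ b))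
        (by rwa [Ne, map_eq_zero_iff _ h.injective]) hε
    obtain ⟨η, hη⟩ := fractionsIn.isUnit_of_isUnit_coe ⟨(ε : V'), hεmem⟩ ε.isUnit
    exact ⟨a, b, ha, hb, η, by rw [hη]; exact Subtype.ext hε⟩

theorem fractionsIn_right (h : HasSameValueGroup V V') (y : V') :
    HasSameValueGroup (fractionsIn V y) V' where
  injective := Subtype.val_injective
  isUnit_of_isUnit_algebraMap := fractionsIn.isUnit_of_isUnit_coe
  exists_associated x hx := by
    obtain ⟨a, b, ha, hb, hab⟩ := h.exists_associated x hx
    have hinj := (h.fractionsIn_left y).injective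
    exact ⟨algebraMap V _ a, algebraMap V _ b, by rwa [Ne, map_eq_zero_iff _ hinj],
      by rwa [Ne, map_eq_zero_iff _ hinj], hab⟩

end FractionsIn

section Valuation

variable {V V' K K' Γ₀ : Type*} [CommRing V] [CommRing V'] [Algebra V V'] [Field K] [Algebra V K]
  [Field K'] [Algebra V' K'] [Algebra V K'] [IsScalarTower V V' K'] [Algebra K K']
  [IsScalarTower V K K'] [LinearOrderedCommGroupWithZero Γ₀] {v : Valuation K' Γ₀}

theorem exists_valuation_algebraMap_eq (h : HasSameValueGroup V V') (hv : v.Integers V') (x : K') :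
    ∃ c : K, v (algebraMap K K' c) = v x := by
  have hmap (a : V) :
      algebraMap K K' (algebraMap V K a) = algebraMap V' K' (algebraMap V V' a) := by
    rw [← IsScalarTower.algebraMap_apply, ← IsScalarTower.algebraMap_apply]
  have key (x : V') : ∃ c : K, v (algebraMap K K' c) = v (algebraMap V' K' x) := by
    rcases eq_or_ne x 0 with rfl | hx
    · exact ⟨0, by simp only [map_zero]⟩
    obtain ⟨a, b, -, hb, hab⟩ := h.exists_associated x hx
    have hvb : v (algebraMap V' K' (algebraMap V V' b)) ≠ 0 := by
      rwa [v.ne_zero_iff, Ne, map_eq_zero_iff _ hv.hom_inj, map_eq_zero_iff _ h.injective]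
    refine ⟨algebraMap V K a / algebraMap V K b, ?_⟩
    rw [map_div₀, map_div₀, hmap, hmap, div_eq_iff hvb, ← map_mul, ← map_mul]
    exact le_antisymm (hv.le_of_dvd hab.symm.dvd) (hv.le_of_dvd hab.dvd)
  obtain ⟨a, rfl | ha⟩ := hv.eq_algebraMap_or_inv_eq_algebraMap x
  · exact key a
  · obtain ⟨c, hc⟩ := key a
    exact ⟨c⁻¹, by rw [map_inv₀, map_inv₀, hc, ← ha, map_inv₀, inv_inv]⟩

theorem integers_comap [IsDomain V] [ValuationRing V] [IsFractionRing V K]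
    (h : HasSameValueGroup V V') (hv : v.Integers V') :
    (v.comap (algebraMap K K')).Integers V where
  hom_inj := IsFractionRing.injective V K
  map_le_one a := by
    rw [Valuation.comap_apply, ← IsScalarTower.algebraMap_apply,
      IsScalarTower.algebraMap_apply V V' K']
    exact hv.map_le_one _
  exists_of_le_one {c} hc := by
    rcases ValuationRing.isInteger_or_isInteger V c with ⟨a, ha⟩ | ⟨d, hd⟩
    · exact ⟨a, ha⟩
    rcases eq_or_ne c 0 with rfl | hc₀
    · exact ⟨0, map_zero _⟩
    obtain ⟨c', hc'⟩ := hv.exists_of_le_one hc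
    have hdc : algebraMap V V' d * c' = 1 := hv.hom_inj <| by
      rw [map_mul, map_one, hc', ← IsScalarTower.algebraMap_apply,
        IsScalarTower.algebraMap_apply V K K', hd, ← map_mul, inv_mul_cancel₀ hc₀, map_one]
    obtain ⟨ε, hε⟩ := (h.isUnit_of_isUnit_algebraMap d (.of_mul_eq_one c' hdc)).exists_right_inv
    refine ⟨ε, inv_injective (eq_inv_of_mul_eq_one_left ?_).symm⟩
    rw [← hd, ← map_mul, hε, map_one]

end Valuation

theorem exists_smooth_of_subset_fractionsIn {V V' : Type*} [CommRing V] [IsDomain V]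
    [ValuationRing V] [CommRing V'] [IsDomain V'] [ValuationRing V'] [Algebra V V'] [Algebra ℚ V]
    (h : HasSameValueGroup V V') {y : V'} {S : Set V'} (hS : S.Finite)
    (hSy : S ⊆ fractionsIn V y) :
    ∃ C : Subalgebra V V', Algebra.Smooth V C ∧ S ⊆ C := by
  let K := FractionRing V
  let K' := FractionRing V'
  let j := IsScalarTower.toAlgHom V V' K'
  have hj : Function.Injective j := IsFractionRing.injective V' K'
  have : FaithfulSMul V K' :=
    (faithfulSMul_iff_algebraMap_injective V K').mpr (by
      rw [IsScalarTower.algebraMap_eq V V' K']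
      exact hj.comp h.injective)
  let _ : Algebra K K' := FractionRing.liftAlgebra V K'
  have : IsScalarTower V K K' := FractionRing.isScalarTower_liftAlgebra V K'
  have hv := integers_valuationRing_valuation (A := V') (K := K')
  obtain ⟨C, hC, hC₁, hSC⟩ := exists_smooth_of_subset_adjoin_simple (h.integers_comap (K := K) hv)
    (h.exists_valuation_algebraMap_eq hv) (hv.map_le_one y) (hS.image j)
    (Set.image_subset_iff.mpr fun x hx ↦ fractionsIn.algebraMap_mem_adjoin_simple (hSy hx))
    (Set.forall_mem_image.mpr fun x _ ↦ hv.map_le_one x)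
  have hCj : (C.comap j).map j = C :=
    Subalgebra.map_comap_eq_self fun c hc ↦ hv.exists_of_le_one (hC₁ c hc)
  exact ⟨C.comap j, .of_equiv ((Subalgebra.equivOfEq _ _ hCj.symm).trans
    (Subalgebra.equivMapOfInjective _ j hj).symm), fun x hx ↦ hSC ⟨x, hx, rfl⟩⟩

end HasSameValueGroup

theorem exists_smooth_trans {V W V' : Type u} [CommRing V] [CommRing W] [CommRing V']
    [Algebra V W] [Algebra W V'] [Algebra V V'] [IsScalarTower V W V']
    (hW : ∀ T : Set W, T.Finite → ∃ C : Subalgebra V W, Algebra.Smooth V C ∧ T ⊆ C)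
    (B : Subalgebra W V') [Algebra.Smooth W B] {S : Set V'} (hS : S.Finite) (hSB : S ⊆ B) :
    ∃ D : Subalgebra V V', Algebra.Smooth V D ∧ S ⊆ D := by
  classical
  obtain ⟨A₀, B₀, _, _, ⟨G, hG⟩, _, ⟨e⟩⟩ := Algebra.Smooth.exists_subalgebra_fg V W B
  choose F hF using fun t : W ⊗[A₀] B₀ ↦ TensorProduct.exists_finset t
  have : Finite S := hS
  obtain ⟨C, _, hTC⟩ := hW (G ∪ ⋃ s : S, Prod.fst '' (F (e ⟨s, hSB s.2⟩) : Set (W × B₀)))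
    (G.finite_toSet.union (Set.finite_iUnion fun s ↦ (Finset.finite_toSet _).image _))
  rw [Set.union_subset_iff, Set.iUnion_subset_iff] at hTC
  have hAC : A₀ ≤ C := hG ▸ Algebra.adjoin_le hTC.1
  let _ : Algebra A₀ C := (Subalgebra.inclusion hAC).toAlgebra
  have : IsScalarTower A₀ C W := .of_algebraMap_eq fun _ ↦ rfl
  have : IsScalarTower V A₀ C := .of_algebraMap_eq fun _ ↦ rfl
  let θ : C ⊗[A₀] B₀ →ₐ[C] W ⊗[A₀] B₀ :=
    Algebra.TensorProduct.map (Algebra.ofId C W) (AlgHom.id A₀ B₀)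
  have hθ : Function.Injective θ :=
    Module.Flat.rTensor_preserves_injective_linearMap (M := B₀)
      (IsScalarTower.toAlgHom A₀ C W).toLinearMap Subtype.val_injective
  let ψ : C ⊗[A₀] B₀ →ₐ[V] V' := (B.val.restrictScalars V).comp
    ((e.symm.toAlgHom.restrictScalars V).comp (θ.restrictScalars V))
  have hψ : Function.Injective ψ := Subtype.val_injective.comp (e.symm.injective.comp hθ)
  have : Algebra.Smooth V (C ⊗[A₀] B₀) := .comp V C _
  refine ⟨ψ.range, .of_equiv (AlgEquiv.ofInjective ψ hψ), fun s hs ↦ ?_⟩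
  obtain ⟨t, ht⟩ : e ⟨s, hSB hs⟩ ∈ θ.range := by
    rw [hF (e ⟨s, hSB hs⟩)]
    refine sum_mem fun i hi ↦ ⟨⟨i.1, hTC.2 ⟨s, hs⟩ ⟨i, hi, rfl⟩⟩ ⊗ₜ i.2, ?_⟩
    simp [θ, Algebra.ofId_apply]
  exact ⟨t, congrArg Subtype.val ((congrArg e.symm ht).trans (e.symm_apply_apply _))⟩

theorem HasSameValueGroup.exists_smooth_subalgebra {V' : Type u} [CommRing V'] [IsDomain V']
    [ValuationRing V'] {S : Set V'} (hS : S.Finite) :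
    ∀ (V : Type u) [CommRing V] [IsDomain V] [ValuationRing V] [Algebra V V'] [Algebra ℚ V],
      HasSameValueGroup V V' → ∃ C : Subalgebra V V', Algebra.Smooth V C ∧ S ⊆ C := by
  induction S, hS using Set.Finite.induction_on with
  | empty =>
    intro V _ _ _ _ _ h
    exact ⟨⊥, .of_equiv (Algebra.botEquivOfInjective h.injective).symm, Set.empty_subset _⟩
  | @insert y S _ hS ih =>
    intro V _ _ _ _ _ h
    let W := fractionsIn V y
    have : ValuationRing W := fractionsIn.valuationRing
    let _ : Algebra ℚ W := ((algebraMap V W).comp (algebraMap ℚ V)).toAlgebra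
    obtain ⟨B, _, hSB⟩ := ih W (h.fractionsIn_right y)
    refine exists_smooth_trans (fun T hT ↦ ?_) B (hS.insert y)
      (Set.insert_subset (B.algebraMap_mem ⟨y, fractionsIn.self_mem⟩) hSB)
    exact (h.fractionsIn_left y).exists_smooth_of_subset_fractionsIn hT
      fun x _ ↦ fractionsIn.mem_fractionsIn_self x

theorem immediate_extension_filtered_colimit_smooth_general
    (V V' : Type u) [CommRing V] [IsDomain V] [ValuationRing V]
    [CommRing V'] [IsDomain V'] [ValuationRing V'] [Algebra V V'] [Algebra ℚ V]
    (h : HasSameValueGroup V V')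
    (A : Type*) [CommRing A] [Algebra V A] [Algebra.FiniteType V A] (u : A →ₐ[V] V') :
    ∃ (B : Type u) (_ : CommRing B) (_ : Algebra V B), Algebra.Smooth V B ∧
      ∃ (f : A →ₐ[V] B) (g : B →ₐ[V] V'), g.comp f = u := by
  obtain ⟨G, hG⟩ := Algebra.FiniteType.out (R := V) (A := A)
  obtain ⟨C, hC, hGC⟩ := HasSameValueGroup.exists_smooth_subalgebra (G.finite_toSet.image u) V h
  have hu : ⊤ ≤ C.comap u := hG ▸ Algebra.adjoin_le fun a ha ↦ hGC ⟨a, ha, rfl⟩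
  exact ⟨C, inferInstance, inferInstance, hC, u.codRestrict C fun _ ↦ hu Algebra.mem_top, C.val,
    rfl⟩

end SameValueGroup

/-- If `V ⊆ V'` is an immediate extension of valuation rings containing `ℚ`, then `V'`
is a filtered direct colimit of smooth `V`-algebras: every `V`-algebra homomorphism
`u : A → V'` from a finitely presented `V`-algebra `A` factors through a smooth
`V`-algebra `B`. -/
theorem immediate_extension_filtered_colimit_smooth
    (V V' : Type u) [CommRing V] [IsDomain V] [ValuationRing V]
    [CommRing V'] [IsDomain V'] [ValuationRing V'] [Algebra V V'] [Algebra ℚ V]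
    (himm : IsImmediateExtension V V')
    (A : Type u) [CommRing A] [Algebra V A] (hA : Algebra.FinitePresentation V A)
    (u : A →ₐ[V] V') :
    ∃ (B : Type u) (_ : CommRing B) (_ : Algebra V B), Algebra.Smooth V B ∧
      ∃ (f : A →ₐ[V] B) (g : B →ₐ[V] V'), g.comp f = u :=
  immediate_extension_filtered_colimit_smooth_general V V' himm.hasSameValueGroup A u
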